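/- Every element of the sister group Γ_s^(2) can be written as ε·W, where ε ∈ {1,−1} and W is a finite product of the matrices I₀ = [[0,0,i/√2],[0,1,0],[i√2,0,0]], R₁ = [[1,0,0],[0,−1,0],[0,0,1]], R₂ = [[1,2,−2],[0,−1,2],[0,0,1]], R₃ = [[1,−i√2,−1],[0,−1,i√2],[0,0,1]], T = [[1,0,i/√2],[0,1,0],[0,0,1]] and their inverses. In other words, Γ_s^(2) is generated, modulo scalar matrices ±I, by I₀, R₁, R₂, R₃, T. -/

import Mathlib

noncomputable section

open Matrix

/-- The Hermitian form matrix `J`. -/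
def matJ : Matrix (Fin 3) (Fin 3) ℂ := !![0,0,1; 0,1,0; 1,0,0]

/-- Membership in `U(2,1;J)`. -/
def inU21 (M : Matrix (Fin 3) (Fin 3) ℂ) : Prop := IsUnit M ∧ Mᴴ * matJ * M = matJ

/-- `i√2`. -/
def isq2 : ℂ := Complex.I * (Real.sqrt 2 : ℂ)

/-- Membership in the ring of integers `O₂ = ℤ + ℤ·i√2`. -/
def inO2 (z : ℂ) : Prop := ∃ a b : ℤ, z = (a : ℂ) + (b : ℂ) * isq2

/-- The sister group `Γ_s^(2)`. -/
def GammaS2 (M : Matrix (Fin 3) (Fin 3) ℂ) : Prop :=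
  inU21 M ∧ inO2 (M 0 0) ∧ inO2 (M 0 1) ∧ inO2 (M 1 1) ∧ inO2 (M 1 2) ∧
    inO2 (M 2 2) ∧ inO2 (isq2 * M 0 2) ∧ inO2 (M 1 0 / isq2) ∧
    inO2 (M 2 0 / isq2) ∧ inO2 (M 2 1 / isq2)

def I₀ : Matrix (Fin 3) (Fin 3) ℂ :=
  !![0, 0, Complex.I / (Real.sqrt 2 : ℂ); 0, 1, 0; Complex.I * (Real.sqrt 2 : ℂ), 0, 0]

def R₁ : Matrix (Fin 3) (Fin 3) ℂ := !![1,0,0; 0,-1,0; 0,0,1]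

def R₂ : Matrix (Fin 3) (Fin 3) ℂ := !![1,2,-2; 0,-1,2; 0,0,1]

def R₃ : Matrix (Fin 3) (Fin 3) ℂ :=
  !![1, -(Complex.I * (Real.sqrt 2 : ℂ)), -1;
     0, -1, Complex.I * (Real.sqrt 2 : ℂ);
     0, 0, 1]

def T : Matrix (Fin 3) (Fin 3) ℂ :=
  !![1, 0, Complex.I / (Real.sqrt 2 : ℂ); 0, 1, 0; 0, 0, 1]

/-!
The natural number `|M 2 0| ^ 2` is lowered by left multiplication by words in the generators
until it vanishes. The first column of `M` is a null vector of `J`, so when `M 2 0 ≠ 0` it is a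
multiple of `(-|ζ|² / 2 - (a / 2) i√2, ζ, 1)` with `ζ = x + y i√2`: a point of the Heisenberg
group. Integral translations bring it to `|x| ≤ 1`, `|y| ≤ 1 / 2`. If `(x² + 2 y²)² < 3 / 2`, then
after a central translation the point lies inside the isometric sphere of `I₀`, so `I₀` lowers the
number. Otherwise `ζ` is close to one of the four corners of the rectangle, and after a central
translation the point lies inside the isometric sphere of the word `I₀ * heis 0 s (s * t) * I₀`,
where the signs `s, t = ±1` select the corner. If `M 2 0 = 0`, then `M` is upper triangular with
diagonal entries `±1`, hence up to sign and a factor `R₁` it is an integral Heisenberg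
translation, and these are words in the generators.
-/

/-! ### The ring `O₂` -/

lemma ofReal_sqrt_two_mul_self : (Real.sqrt 2 : ℂ) * (Real.sqrt 2 : ℂ) = 2 := by
  rw [← Complex.ofReal_mul, Real.mul_self_sqrt zero_le_two, Complex.ofReal_ofNat]

lemma isq2_mul_self : isq2 * isq2 = -2 := by
  rw [isq2, mul_mul_mul_comm, Complex.I_mul_I, ofReal_sqrt_two_mul_self, neg_one_mul]

lemma isq2_ne_zero : isq2 ≠ 0 := by
  simp [isq2]

lemma star_isq2 : star isq2 = -isq2 := by
  simp [isq2]

lemma exists_eq_add_mul_isq2 (z : ℂ) : ∃ x y : ℝ, z = x + y * isq2 :=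
  ⟨z.re, z.im / Real.sqrt 2, by apply Complex.ext <;> simp [isq2]⟩

lemma star_add_mul_isq2 (x y : ℝ) : star (x + y * isq2 : ℂ) = x - y * isq2 := by
  rw [star_add, star_mul', star_isq2, Complex.star_def, Complex.conj_ofReal, Complex.conj_ofReal]
  ring

lemma normSq_add_mul_isq2 (x y : ℝ) : Complex.normSq (x + y * isq2) = x ^ 2 + 2 * y ^ 2 := by
  have h : Real.sqrt 2 * Real.sqrt 2 = 2 := Real.mul_self_sqrt zero_le_two
  simp only [Complex.normSq_apply, isq2, Complex.add_re, Complex.add_im, Complex.mul_re,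
    Complex.mul_im, Complex.ofReal_re, Complex.ofReal_im, Complex.I_re, Complex.I_im]
  linear_combination y ^ 2 * h

lemma add_mul_isq2_inj {x y x' y' : ℝ} (h : (x + y * isq2 : ℂ) = x' + y' * isq2) :
    x = x' ∧ y = y' :=
  ⟨by simpa [isq2] using congrArg Complex.re h, by simpa [isq2] using congrArg Complex.im h⟩

/-- The embedding of the abstract ring `ℤ[√-2]` into `ℂ` with image `O₂`. -/
def embO2 : ℤ√(-2) →+* ℂ :=
  Zsqrtd.lift ⟨isq2, by rw [isq2_mul_self]; norm_num⟩

lemma embO2_apply (u : ℤ√(-2)) : embO2 u = (u.re : ℝ) + (u.im : ℝ) * isq2 := by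
  simp [embO2]

lemma embO2_injective : Function.Injective embO2 :=
  Zsqrtd.lift_injective _ fun n h ↦ by linarith [mul_self_nonneg n]

lemma normSq_embO2 (u : ℤ√(-2)) : Complex.normSq (embO2 u) = u.norm := by
  rw [embO2_apply, normSq_add_mul_isq2, Zsqrtd.norm_def]
  push_cast
  ring

/-- The ring `O₂`, as a subring of `ℂ`. -/
def ringO2 : Subring ℂ := embO2.range

lemma mem_ringO2 {z : ℂ} : z ∈ ringO2 ↔ inO2 z := by
  constructor
  · rintro ⟨u, rfl⟩
    exact ⟨u.re, u.im, by simp [embO2_apply]⟩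
  · rintro ⟨m, n, rfl⟩
    exact ⟨⟨m, n⟩, by simp [embO2_apply]⟩

lemma isq2_mem_ringO2 : isq2 ∈ ringO2 :=
  mem_ringO2.2 ⟨0, 1, by simp⟩

lemma star_mem_ringO2 {z : ℂ} (hz : z ∈ ringO2) : star z ∈ ringO2 := by
  obtain ⟨u, rfl⟩ := hz
  exact ⟨star u, by simp only [embO2_apply, star_add_mul_isq2]; simp [sub_eq_add_neg]⟩

lemma add_mul_isq2_mem_ringO2 {x y : ℝ} (h : (x + y * isq2 : ℂ) ∈ ringO2) :
    ∃ m n : ℤ, x = m ∧ y = n := by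
  obtain ⟨u, hu⟩ := h
  rw [embO2_apply] at hu
  obtain ⟨hx, hy⟩ := add_mul_isq2_inj hu
  exact ⟨u.re, u.im, hx.symm, hy.symm⟩

lemma exists_normSq_eq_natCast {z : ℂ} (hz : z ∈ ringO2) : ∃ n : ℕ, Complex.normSq z = n := by
  obtain ⟨u, rfl⟩ := hz
  obtain ⟨n, hn⟩ := Int.eq_ofNat_of_zero_le (Zsqrtd.norm_nonneg (by norm_num) u)
  exact ⟨n, by rw [normSq_embO2, hn, Int.cast_natCast]⟩

lemma zsqrtd_eq_one_or_neg_one_of_isUnit {d : ℤ} (hd : d < -1) {u : ℤ√d} (hu : IsUnit u) :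
    u = 1 ∨ u = -1 := by
  have hnorm : u.re * u.re - d * u.im * u.im = 1 := (Zsqrtd.norm_eq_one_iff' (by linarith) u).2 hu
  have him : u.im = 0 := by
    by_contra h
    have : 0 < u.im ^ 2 := by positivity
    nlinarith [sq_nonneg u.re]
  have hre : u.re = 1 ∨ u.re = -1 := by
    rw [him, mul_zero, sub_zero] at hnorm
    exact mul_self_eq_one_iff.1 hnorm
  exact hre.imp (fun h ↦ Zsqrtd.ext h him) fun h ↦ Zsqrtd.ext h (by simp [him])

lemma eq_one_or_neg_one_of_mul_eq_one {z y : ℂ} (hz : z ∈ ringO2) (hy : y ∈ ringO2)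
    (h : z * y = 1) : z = 1 ∨ z = -1 := by
  obtain ⟨u, rfl⟩ := hz
  obtain ⟨v, rfl⟩ := hy
  have huv : u * v = 1 := embO2_injective (by rw [map_mul, h, map_one])
  rcases zsqrtd_eq_one_or_neg_one_of_isUnit (by norm_num) (IsUnit.of_mul_eq_one v huv)
    with rfl | rfl
  · exact .inl (map_one _)
  · exact .inr (by rw [map_neg, map_one])

/-! ### The unitary group of `J` -/

lemma matJ_mul_matJ : matJ * matJ = 1 := by
  ext i j
  fin_cases i <;> fin_cases j <;> simp [matJ, Matrix.mul_apply, Fin.sum_univ_three]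

lemma matJ_mul_mul_matJ_apply (A : Matrix (Fin 3) (Fin 3) ℂ) (i j : Fin 3) :
    (matJ * A * matJ) i j = A i.rev j.rev := by
  fin_cases i <;> fin_cases j <;>
    simp [matJ, Matrix.mul_apply, Matrix.vecMul, dotProduct, Fin.sum_univ_three, Fin.rev]

section Unitary

variable {M N : Matrix (Fin 3) (Fin 3) ℂ}

lemma matJ_conjTranspose_mul_eq_one (h : Mᴴ * matJ * M = matJ) : matJ * Mᴴ * matJ * M = 1 := by
  rw [Matrix.mul_assoc matJ, Matrix.mul_assoc, h, matJ_mul_matJ]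

lemma inU21_of_form_eq (h : Mᴴ * matJ * M = matJ) : inU21 M :=
  ⟨IsUnit.of_mul_eq_one_right _ (matJ_conjTranspose_mul_eq_one h), h⟩

lemma inU21_one : inU21 1 :=
  inU21_of_form_eq (by simp)

lemma inU21.mul (hM : inU21 M) (hN : inU21 N) : inU21 (M * N) :=
  inU21_of_form_eq <| calc
    (M * N)ᴴ * matJ * (M * N) = Nᴴ * (Mᴴ * matJ * M) * N := by
      simp only [conjTranspose_mul, Matrix.mul_assoc]
    _ = matJ := by rw [hM.2, hN.2]

lemma inU21.neg (hM : inU21 M) : inU21 (-M) :=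
  inU21_of_form_eq (by simpa using hM.2)

lemma inU21.inv (hM : inU21 M) : inU21 M⁻¹ := by
  have hinv : M * M⁻¹ = 1 := Matrix.mul_nonsing_inv M ((isUnit_iff_isUnit_det M).1 hM.1)
  refine inU21_of_form_eq ?_
  calc
    M⁻¹ᴴ * matJ * M⁻¹ = M⁻¹ᴴ * (Mᴴ * matJ * M) * M⁻¹ := by rw [hM.2]
    _ = (M * M⁻¹)ᴴ * matJ * (M * M⁻¹) := by simp only [conjTranspose_mul, Matrix.mul_assoc]
    _ = matJ := by rw [hinv, conjTranspose_one, Matrix.one_mul, Matrix.mul_one]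

lemma inU21.inv_apply (hM : inU21 M) (i j : Fin 3) : M⁻¹ i j = star (M j.rev i.rev) := by
  rw [Matrix.inv_eq_left_inv (matJ_conjTranspose_mul_eq_one hM.2), matJ_mul_mul_matJ_apply,
    conjTranspose_apply]

lemma inU21.form_apply (hM : inU21 M) (i j : Fin 3) :
    star (M 0 i) * M 2 j + star (M 1 i) * M 1 j + star (M 2 i) * M 0 j = matJ i j := by
  rw [← hM.2]
  simp only [matJ, Matrix.mul_apply, Fin.sum_univ_three, conjTranspose_apply, of_apply, cons_val]
  ring

end Unitary

/-! ### The sister group -/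

/-- The tiled order with exponents `e`: the matrices whose `(i, j)` entry lies in
`w ^ e i j * R`. -/
def tiledOrder {K ι : Type*} [Field K] [Fintype ι] [DecidableEq ι] (R : Subring K) {w : K}
    (hw : w ∈ R) (hw0 : w ≠ 0) (e : Matrix ι ι ℤ) (he0 : ∀ i, e i i = 0)
    (he : ∀ i j k, e i k ≤ e i j + e j k) : Subring (Matrix ι ι K) where
  carrier := {M | ∀ i j, w ^ (-e i j) * M i j ∈ R}
  zero_mem' i j := by simp [R.zero_mem]
  one_mem' i j := by
    rcases eq_or_ne i j with rfl | hij
    · simp [he0, R.one_mem]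
    · simp [Matrix.one_apply_ne hij, R.zero_mem]
  add_mem' hA hB i j := by
    rw [Matrix.add_apply, mul_add]
    exact R.add_mem (hA i j) (hB i j)
  neg_mem' hA i j := by
    rw [Matrix.neg_apply, mul_neg]
    exact R.neg_mem (hA i j)
  mul_mem' {A B} hA hB i k := by
    rw [Matrix.mul_apply, Finset.mul_sum]
    refine R.sum_mem fun j _ ↦ ?_
    obtain ⟨n, hn⟩ := Int.eq_ofNat_of_zero_le (sub_nonneg.2 (he i j k))
    have hsplit : w ^ (-e i k) * (A i j * B j k) =
        w ^ n * ((w ^ (-e i j) * A i j) * (w ^ (-e j k) * B j k)) := by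
      rw [show -e i k = n + -e i j + -e j k by linarith, zpow_add₀ hw0, zpow_add₀ hw0, zpow_natCast]
      ring
    rw [hsplit]
    exact R.mul_mem (R.pow_mem hw n) (R.mul_mem (hA i j) (hB j k))

/-- The exponents of `i√2` in the integrality conditions defining `Γ_s^(2)`. -/
def sisterExponent : Matrix (Fin 3) (Fin 3) ℤ := !![0, 0, -1; 1, 0, 0; 1, 1, 0]

/-- The integrality conditions defining `Γ_s^(2)`, as a tiled order over `O₂`. -/
def sisterOrder : Subring (Matrix (Fin 3) (Fin 3) ℂ) :=
  tiledOrder ringO2 isq2_mem_ringO2 isq2_ne_zero sisterExponent (by decide) (by decide)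

lemma gammaS2_iff {M : Matrix (Fin 3) (Fin 3) ℂ} : GammaS2 M ↔ inU21 M ∧ M ∈ sisterOrder := by
  have h : M ∈ sisterOrder ↔ ∀ i j, isq2 ^ (-sisterExponent i j) * M i j ∈ ringO2 := Iff.rfl
  simp only [h, GammaS2, sisterExponent, Fin.forall_fin_succ, mem_ringO2]
  simp [div_eq_inv_mul]
  tauto

lemma sisterExponent_rev (i j : Fin 3) :
    sisterExponent i j = sisterExponent j.rev i.rev := by
  fin_cases i <;> fin_cases j <;> rfl

lemma GammaS2.inv_mem_sisterOrder {M : Matrix (Fin 3) (Fin 3) ℂ} (hM : GammaS2 M) :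
    M⁻¹ ∈ sisterOrder := by
  obtain ⟨hU, hO⟩ := gammaS2_iff.1 hM
  intro i j
  have hstar := star_mem_ringO2 (hO j.rev i.rev)
  rw [star_mul', star_zpow₀, star_isq2] at hstar
  rw [hU.inv_apply, sisterExponent_rev]
  rcases (-sisterExponent j.rev i.rev).even_or_odd with he | ho
  · rwa [he.neg_zpow] at hstar
  · rwa [ho.neg_zpow, neg_mul, neg_mem_iff] at hstar

/-- The sister group `Γ_s^(2)` as a submonoid of the matrix ring; it is closed under inversion by
`inv_mem_sisterGroup`. -/
def sisterGroup : Submonoid (Matrix (Fin 3) (Fin 3) ℂ) where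
  carrier := {M | GammaS2 M}
  one_mem' := gammaS2_iff.2 ⟨inU21_one, sisterOrder.one_mem⟩
  mul_mem' hA hB :=
    gammaS2_iff.2 ⟨hA.1.mul hB.1, sisterOrder.mul_mem (gammaS2_iff.1 hA).2 (gammaS2_iff.1 hB).2⟩

section SisterGroup

variable {M : Matrix (Fin 3) (Fin 3) ℂ}

lemma mem_sisterGroup : M ∈ sisterGroup ↔ GammaS2 M := Iff.rfl

lemma inv_mem_sisterGroup (hM : M ∈ sisterGroup) : M⁻¹ ∈ sisterGroup :=
  gammaS2_iff.2 ⟨hM.1.inv, hM.inv_mem_sisterOrder⟩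

lemma neg_mem_sisterGroup (hM : M ∈ sisterGroup) : -M ∈ sisterGroup :=
  gammaS2_iff.2 ⟨hM.1.neg, sisterOrder.neg_mem (gammaS2_iff.1 hM).2⟩

lemma apply_two_zero_mem_ringO2 (hM : M ∈ sisterGroup) : M 2 0 ∈ ringO2 := by
  obtain ⟨-, -, -, -, -, -, -, -, h20, -⟩ := hM
  simpa [mul_div_cancel₀ _ isq2_ne_zero] using
    ringO2.mul_mem isq2_mem_ringO2 (mem_ringO2.2 h20)

end SisterGroup

/-! ### Heisenberg translations -/

/-- The Heisenberg translation by `(x + y i√2, a)`. Its last column is the general null vector of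
`J` with last entry `1`. -/
def heis (x y a : ℝ) : Matrix (Fin 3) (Fin 3) ℂ :=
  !![1, -(x - y * isq2), -(x ^ 2 + 2 * y ^ 2) / 2 - a / 2 * isq2;
     0, 1, x + y * isq2;
     0, 0, 1]

lemma heis_zero : heis 0 0 0 = 1 := by
  ext i j
  fin_cases i <;> fin_cases j <;> simp [heis]

lemma heis_mul_heis (x y a x' y' a' : ℝ) :
    heis x y a * heis x' y' a' = heis (x + x') (y + y') (a + a' + 2 * (x * y' - y * x')) := by
  ext i j
  fin_cases i <;> fin_cases j <;> simp [heis, Matrix.mul_apply, Fin.sum_univ_three]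
  · ring
  · linear_combination (y * y' : ℂ) * isq2_mul_self
  · ring

lemma heis_inv (x y a : ℝ) : (heis x y a)⁻¹ = heis (-x) (-y) (-a) := by
  refine Matrix.inv_eq_right_inv ?_
  rw [heis_mul_heis, ← heis_zero]
  congr 1 <;> ring

lemma heis_pow (x y a : ℝ) (n : ℕ) : heis x y a ^ n = heis (n * x) (n * y) (n * a) := by
  induction n with
  | zero => simp [heis_zero]
  | succ n ih =>
    rw [pow_succ, ih, heis_mul_heis]
    congr 1 <;> push_cast <;> ring

lemma heis_zpow (x y a : ℝ) (n : ℤ) : heis x y a ^ n = heis (n * x) (n * y) (n * a) := by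
  obtain ⟨n, rfl | rfl⟩ := n.eq_nat_or_neg
  · rw [zpow_natCast, heis_pow, Int.cast_natCast]
  · rw [Matrix.zpow_neg_natCast, heis_pow, heis_inv]
    push_cast
    simp only [neg_mul]

lemma inU21_heis (x y a : ℝ) : inU21 (heis x y a) := by
  have hstar : (starRingEnd ℂ) isq2 = -isq2 := star_isq2
  have htwo : (starRingEnd ℂ) 2 = 2 := map_ofNat _ 2
  refine inU21_of_form_eq ?_
  ext i j
  fin_cases i <;> fin_cases j <;>
    simp [heis, matJ, Matrix.mul_apply, Fin.sum_univ_three, conjTranspose_apply, hstar, htwo]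
  · ring
  · ring
  · linear_combination -(y ^ 2 : ℂ) * isq2_mul_self

lemma heis_mem_sisterGroup (m n k : ℤ) : heis (2 * m) n k ∈ sisterGroup := by
  refine ⟨inU21_heis _ _ _, ⟨1, 0, ?_⟩, ⟨-2 * m, n, ?_⟩, ⟨1, 0, ?_⟩, ⟨2 * m, n, ?_⟩, ⟨1, 0, ?_⟩,
    ⟨k, -(2 * m ^ 2 + n ^ 2), ?_⟩, ⟨0, 0, ?_⟩, ⟨0, 0, ?_⟩, ⟨0, 0, ?_⟩⟩ <;> simp [heis]
  · ring
  · linear_combination (-k / 2 : ℂ) * isq2_mul_self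

lemma eq_smul_heis_col_of_null {v : Fin 3 → ℂ} (h2 : v 2 ≠ 0)
    (hv : star (v 0) * v 2 + star (v 1) * v 1 + star (v 2) * v 0 = 0) :
    ∃ x y a : ℝ, v = v 2 • (heis x y a).col 2 := by
  obtain ⟨x, y, hζ⟩ := exists_eq_add_mul_isq2 (v 1 / v 2)
  obtain ⟨t, u, hα⟩ := exists_eq_add_mul_isq2 (v 0 / v 2)
  have hv1 : v 1 = v 2 * (x + y * isq2) := by rw [← hζ, mul_div_cancel₀ _ h2]
  have hv0 : v 0 = v 2 * (t + u * isq2) := by rw [← hα, mul_div_cancel₀ _ h2]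
  have hnull : (t : ℂ) = -(x ^ 2 + 2 * y ^ 2) / 2 := by
    have h2' : star (v 2) * v 2 ≠ 0 := mul_ne_zero (star_ne_zero.2 h2) h2
    rw [hv0, hv1, star_mul', star_mul', star_add_mul_isq2, star_add_mul_isq2] at hv
    apply mul_left_cancel₀ h2'
    linear_combination hv / 2 + star (v 2) * v 2 * (y ^ 2 / 2) * isq2_mul_self
  refine ⟨x, y, -2 * u, funext fun i ↦ ?_⟩
  fin_cases i
  · have hentry : v 0 = v 2 * heis x y (-2 * u) 0 2 := by
      simp only [hv0, hnull, heis, of_apply, cons_val]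
      push_cast
      ring
    simpa using hentry
  · simp [heis, hv1]
  · simp [heis]

lemma eq_heis_of_unitriangular {M : Matrix (Fin 3) (Fin 3) ℂ} (hM : inU21 M) (h00 : M 0 0 = 1)
    (h11 : M 1 1 = 1) (h22 : M 2 2 = 1) (h10 : M 1 0 = 0) (h20 : M 2 0 = 0) (h21 : M 2 1 = 0) :
    ∃ x y a : ℝ, M = heis x y a := by
  obtain ⟨x, y, a, hcol⟩ := eq_smul_heis_col_of_null (v := M.col 2) (by simp [h22])
    (by simpa [matJ] using hM.form_apply 2 2)
  have hM2 (i : Fin 3) : M i 2 = heis x y a i 2 := by simpa [h22] using congrFun hcol i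
  have h12 : M 1 2 = x + y * isq2 := by simpa [heis] using hM2 1
  have h01 : M 0 1 = -(x - y * isq2) := by
    have h := hM.form_apply 2 1
    rw [h22, h21, h11, h12, star_add_mul_isq2, star_one] at h
    simp only [matJ, of_apply, cons_val] at h
    linear_combination h
  refine ⟨x, y, a, ?_⟩
  ext i j
  fin_cases j
  · fin_cases i <;> simp [heis, h00, h10, h20]
  · fin_cases i <;> simp [heis, h01, h11, h21]
  · exact hM2 i

lemma exists_int_of_heis_mem_sisterGroup {x y a : ℝ} (h : heis x y a ∈ sisterGroup) :
    ∃ m n k : ℤ, x = 2 * m ∧ y = n ∧ a = k := by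
  obtain ⟨-, -, -, -, h12, -, h02, -⟩ := h
  obtain ⟨l, n, hl, hn⟩ := add_mul_isq2_mem_ringO2 (x := x) (y := y)
    (by simpa [heis] using mem_ringO2.2 h12)
  obtain ⟨k, r, hk, hr⟩ := add_mul_isq2_mem_ringO2 (x := a) (y := -(x ^ 2 + 2 * y ^ 2) / 2) (by
    convert mem_ringO2.2 h02 using 1
    simp only [heis, of_apply, cons_val]
    push_cast
    linear_combination (a / 2 : ℂ) * isq2_mul_self)
  have hsq : l ^ 2 = 2 * (-r - n ^ 2) := by
    rw [hl, hn] at hr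
    rify
    linarith
  obtain ⟨m, rfl⟩ : 2 ∣ l := Int.prime_two.dvd_of_dvd_pow (Dvd.intro _ hsq.symm)
  exact ⟨m, n, k, by rw [hl]; push_cast; rfl, hn, hk⟩

/-! ### The submonoid generated by the given matrices -/

lemma inv_mem_closure_union_image_inv {n R : Type*} [Fintype n] [DecidableEq n] [CommRing R]
    {S : Set (Matrix n n R)} (hS : ∀ A ∈ S, IsUnit A) {A : Matrix n n R}
    (hA : A ∈ Submonoid.closure (S ∪ (·⁻¹) '' S)) :
    A⁻¹ ∈ Submonoid.closure (S ∪ (·⁻¹) '' S) := by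
  induction hA using Submonoid.closure_induction with
  | mem A hA =>
    rcases hA with hA | ⟨B, hB, rfl⟩
    · exact Submonoid.subset_closure (.inr ⟨A, hA, rfl⟩)
    · rw [Matrix.nonsing_inv_nonsing_inv B ((isUnit_iff_isUnit_det B).1 (hS B hB))]
      exact Submonoid.subset_closure (.inl hB)
  | one => rw [inv_one]; exact one_mem _
  | mul A B _ _ hA hB => rw [Matrix.mul_inv_rev]; exact mul_mem hB hA

/-- The five generators of the sister group. -/
def generators : Set (Matrix (Fin 3) (Fin 3) ℂ) := {I₀, R₁, R₂, R₃, T}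

/-- The matrices that are words in the five generators and their inverses. -/
def generated : Submonoid (Matrix (Fin 3) (Fin 3) ℂ) :=
  Submonoid.closure (generators ∪ (·⁻¹) '' generators)

lemma generators_subset_generated : generators ⊆ generated :=
  Set.subset_union_left.trans Submonoid.subset_closure

lemma I₀_mem_generated : I₀ ∈ generated := generators_subset_generated (by simp [generators])

lemma R₁_mem_generated : R₁ ∈ generated := generators_subset_generated (by simp [generators])

lemma I_div_sqrt_two : Complex.I / (Real.sqrt 2 : ℂ) = isq2 / 2 := by
  rw [isq2, div_eq_div_iff (by simp) two_ne_zero, mul_assoc, ofReal_sqrt_two_mul_self]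

lemma I₀_eq : I₀ = !![0, 0, isq2 / 2; 0, 1, 0; isq2, 0, 0] := by
  rw [I₀, I_div_sqrt_two, ← isq2]

lemma T_eq_heis : T = heis 0 0 (-1) := by
  rw [T, I_div_sqrt_two]
  ext i j
  fin_cases i <;> fin_cases j <;> simp [heis]
  ring

lemma R₁_mul_R₁ : R₁ * R₁ = 1 := by
  ext i j
  fin_cases i <;> fin_cases j <;> simp [R₁, Matrix.mul_apply, Fin.sum_univ_three]

lemma R₂_eq_heis_mul : R₂ = heis 2 0 0 * R₁ := by
  ext i j
  fin_cases i <;> fin_cases j <;> simp [heis, R₁, R₂, Matrix.mul_apply, Fin.sum_univ_three]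
  norm_num

lemma R₃_eq_heis_mul : R₃ = heis 0 1 0 * R₁ := by
  rw [R₃, ← isq2]
  ext i j
  fin_cases i <;> fin_cases j <;> simp [heis, R₁, Matrix.mul_apply, Fin.sum_univ_three]

lemma I₀_mem_sisterGroup : I₀ ∈ sisterGroup := by
  have hstar : (starRingEnd ℂ) isq2 = -isq2 := star_isq2
  have htwo : (starRingEnd ℂ) 2 = 2 := map_ofNat _ 2
  rw [I₀_eq]
  refine ⟨inU21_of_form_eq ?_, ⟨0, 0, ?_⟩, ⟨0, 0, ?_⟩, ⟨1, 0, ?_⟩, ⟨0, 0, ?_⟩, ⟨0, 0, ?_⟩,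
    ⟨-1, 0, ?_⟩, ⟨0, 0, ?_⟩, ⟨1, 0, ?_⟩, ⟨0, 0, ?_⟩⟩
  · ext i j
    fin_cases i <;> fin_cases j <;>
      simp [matJ, Matrix.mul_apply, Fin.sum_univ_three, conjTranspose_apply, hstar, htwo]
    all_goals linear_combination (-1 / 2 : ℂ) * isq2_mul_self
  all_goals simp [isq2_ne_zero]
  linear_combination (1 / 2 : ℂ) * isq2_mul_self

lemma R₁_mem_sisterGroup : R₁ ∈ sisterGroup := by
  refine ⟨inU21_of_form_eq ?_, ⟨1, 0, ?_⟩, ⟨0, 0, ?_⟩, ⟨-1, 0, ?_⟩, ⟨0, 0, ?_⟩, ⟨1, 0, ?_⟩,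
    ⟨0, 0, ?_⟩, ⟨0, 0, ?_⟩, ⟨0, 0, ?_⟩, ⟨0, 0, ?_⟩⟩
  · ext i j
    fin_cases i <;> fin_cases j <;>
      simp [R₁, matJ, Matrix.mul_apply, Fin.sum_univ_three, conjTranspose_apply]
  all_goals simp [R₁]

lemma generators_subset_sisterGroup : generators ⊆ sisterGroup := by
  rintro A (rfl | rfl | rfl | rfl | rfl)
  · exact I₀_mem_sisterGroup
  · exact R₁_mem_sisterGroup
  · rw [R₂_eq_heis_mul]
    exact mul_mem (by simpa using heis_mem_sisterGroup 1 0 0) R₁_mem_sisterGroup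
  · rw [R₃_eq_heis_mul]
    exact mul_mem (by simpa using heis_mem_sisterGroup 0 1 0) R₁_mem_sisterGroup
  · rw [T_eq_heis]
    simpa using heis_mem_sisterGroup 0 0 (-1)

lemma generated_le_sisterGroup : generated ≤ sisterGroup := by
  refine Submonoid.closure_le.2 (Set.union_subset generators_subset_sisterGroup ?_)
  rintro _ ⟨A, hA, rfl⟩
  exact inv_mem_sisterGroup (generators_subset_sisterGroup hA)

lemma inv_mem_generated {A : Matrix (Fin 3) (Fin 3) ℂ} (hA : A ∈ generated) : A⁻¹ ∈ generated :=
  inv_mem_closure_union_image_inv (fun _ hB ↦ (generators_subset_sisterGroup hB).1.1) hA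

lemma zpow_mem_generated {A : Matrix (Fin 3) (Fin 3) ℂ} (hA : A ∈ generated) (n : ℤ) :
    A ^ n ∈ generated := by
  obtain ⟨n, rfl | rfl⟩ := n.eq_nat_or_neg
  · rw [zpow_natCast]
    exact pow_mem hA n
  · rw [Matrix.zpow_neg_natCast]
    exact inv_mem_generated (pow_mem hA n)

lemma heis_mem_generated (m n k : ℤ) : heis (2 * m) n k ∈ generated := by
  have hx : heis 2 0 0 ∈ generated := by
    have h : heis 2 0 0 = R₂ * R₁ := by
      rw [R₂_eq_heis_mul, Matrix.mul_assoc, R₁_mul_R₁, Matrix.mul_one]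
    exact h ▸ mul_mem (generators_subset_generated (by simp [generators])) R₁_mem_generated
  have hy : heis 0 1 0 ∈ generated := by
    have h : heis 0 1 0 = R₃ * R₁ := by
      rw [R₃_eq_heis_mul, Matrix.mul_assoc, R₁_mul_R₁, Matrix.mul_one]
    exact h ▸ mul_mem (generators_subset_generated (by simp [generators])) R₁_mem_generated
  have ha : heis 0 0 (-1) ∈ generated :=
    T_eq_heis ▸ generators_subset_generated (by simp [generators])
  have hword : heis (2 * m) n k =
      heis 2 0 0 ^ m * heis 0 1 0 ^ n * heis 0 0 (-1) ^ (4 * m * n - k) := by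
    simp only [heis_zpow, heis_mul_heis]
    congr 1 <;> push_cast <;> ring
  rw [hword]
  exact mul_mem (mul_mem (zpow_mem_generated hx m) (zpow_mem_generated hy n))
    (zpow_mem_generated ha _)

/-! ### Upper triangular elements -/

lemma inU21.upperTriangular {M : Matrix (Fin 3) (Fin 3) ℂ} (hM : inU21 M) (h20 : M 2 0 = 0) :
    M 1 0 = 0 ∧ M 2 1 = 0 ∧ star (M 0 0) * M 2 2 = 1 ∧ star (M 1 1) * M 1 1 = 1 := by
  have h10 : M 1 0 = 0 := by simpa [h20, matJ] using hM.form_apply 0 0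
  have h02 : star (M 0 0) * M 2 2 = 1 := by simpa [h20, h10, matJ] using hM.form_apply 0 2
  have h00 : M 0 0 ≠ 0 := fun h ↦ by simp [h] at h02
  have h21 : M 2 1 = 0 := by simpa [h20, h10, h00, matJ] using hM.form_apply 0 1
  exact ⟨h10, h21, h02, by simpa [h21, matJ] using hM.form_apply 1 1⟩

lemma mem_generated_of_unitriangular {M : Matrix (Fin 3) (Fin 3) ℂ} (hM : M ∈ sisterGroup)
    (h00 : M 0 0 = 1) (h11 : M 1 1 = 1) (h22 : M 2 2 = 1) (h10 : M 1 0 = 0) (h20 : M 2 0 = 0)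
    (h21 : M 2 1 = 0) : M ∈ generated := by
  obtain ⟨x, y, a, rfl⟩ := eq_heis_of_unitriangular hM.1 h00 h11 h22 h10 h20 h21
  obtain ⟨m, n, k, rfl, rfl, rfl⟩ := exists_int_of_heis_mem_sisterGroup hM
  exact heis_mem_generated m n k

lemma mem_generated_of_upperTriangular {M : Matrix (Fin 3) (Fin 3) ℂ} (hM : M ∈ sisterGroup)
    (h20 : M 2 0 = 0) (h22 : M 2 2 = 1) : M ∈ generated := by
  obtain ⟨h10, h21, h02, h11⟩ := hM.1.upperTriangular h20
  have h00 : M 0 0 = 1 := by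
    rw [h22, mul_one] at h02
    rw [← star_star (M 0 0), h02, star_one]
  obtain ⟨-, -, -, hO, -⟩ := id hM
  replace hO : M 1 1 ∈ ringO2 := mem_ringO2.2 hO
  rcases eq_one_or_neg_one_of_mul_eq_one hO (star_mem_ringO2 hO) (by rwa [mul_comm])
    with h11 | h11
  · exact mem_generated_of_unitriangular hM h00 h11 h22 h10 h20 h21
  · have hMR : M * R₁ ∈ generated := by
      apply mem_generated_of_unitriangular (mul_mem hM R₁_mem_sisterGroup) <;>
        simp [R₁, Matrix.mul_apply, Fin.sum_univ_three, h00, h11, h22, h10, h20, h21]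
    have h := mul_mem hMR R₁_mem_generated
    rwa [Matrix.mul_assoc, R₁_mul_R₁, Matrix.mul_one] at h

lemma mem_or_neg_mem_generated_of_apply_eq_zero {M : Matrix (Fin 3) (Fin 3) ℂ}
    (hM : M ∈ sisterGroup) (h20 : M 2 0 = 0) : M ∈ generated ∨ -M ∈ generated := by
  obtain ⟨-, -, h02, -⟩ := hM.1.upperTriangular h20
  obtain ⟨-, h00, -, -, -, h22, -⟩ := id hM
  rcases eq_one_or_neg_one_of_mul_eq_one (mem_ringO2.2 h22)
    (star_mem_ringO2 (mem_ringO2.2 h00)) (by rwa [mul_comm]) with h | h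
  · exact .inl (mem_generated_of_upperTriangular hM h20 h)
  · exact .inr (mem_generated_of_upperTriangular (neg_mem_sisterGroup hM) (by simp [h20])
      (by simp [h]))

/-! ### Descent -/

lemma I₀_mul_heis_apply (x y a : ℝ) :
    (I₀ * heis x y a) 2 2 = (a : ℝ) + (-(x ^ 2 + 2 * y ^ 2) / 2 : ℝ) * isq2 := by
  simp [I₀_eq, heis, Matrix.mul_apply, Fin.sum_univ_three]
  linear_combination (-a / 2 : ℂ) * isq2_mul_self

lemma I₀_mul_heis_mul_I₀_mul_heis_apply (s b x y a : ℝ) :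
    (I₀ * heis 0 s b * I₀ * heis x y a) 2 2 =
      (-(1 + 2 * s * x + s ^ 2 * (x ^ 2 + 2 * y ^ 2) - b * a) : ℝ) +
        (-(2 * s * y + b * (x ^ 2 + 2 * y ^ 2) / 2 + s ^ 2 * a) : ℝ) * isq2 := by
  simp [I₀_eq, heis, Matrix.mul_apply, Fin.sum_univ_three]
  linear_combination ((s ^ 2 + b / 2 * isq2) * ((x ^ 2 + 2 * y ^ 2) / 2 + a / 2 * isq2) +
    s * (x + y * isq2) + 1 / 2 - b * a / 2) * isq2_mul_self

/-- Completing the square at `x = -2 s / 3`, `y = -t / 3`, the centre of the region near the corner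
`(-s, -t / 2)`, bounds the left-hand side by `3 / 4 + 1 / 24`. -/
lemma corner_lt_one {s t x y a : ℝ} (hs : s = 1 ∨ s = -1) (ht : t = 1 ∨ t = -1)
    (hx : |s * x + 2 / 3| ≤ 1 / 3) (hy : |t * y + 1 / 3| ≤ 1 / 6)
    (ha : |a - s * t * (1 + 2 * s * x - 4 * t * y) / 3| ≤ 1 / 2) :
    (1 + 2 * s * x + (x ^ 2 + 2 * y ^ 2) - s * t * a) ^ 2 +
      2 * (2 * s * y + s * t * (x ^ 2 + 2 * y ^ 2) / 2 + a) ^ 2 < 1 := by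
  have hsq : (1 + 2 * s * x + (x ^ 2 + 2 * y ^ 2) - s * t * a) ^ 2 +
      2 * (2 * s * y + s * t * (x ^ 2 + 2 * y ^ 2) / 2 + a) ^ 2 =
      3 * (a - s * t * (1 + 2 * s * x - 4 * t * y) / 3) ^ 2 +
        3 / 2 * ((s * x + 2 / 3) ^ 2 + 2 * (t * y + 1 / 3) ^ 2) ^ 2 := by
    rcases hs with rfl | rfl <;> rcases ht with rfl | rfl <;> ring
  have ha2 := sq_le_sq' (abs_le.1 ha).1 (abs_le.1 ha).2
  have hx2 := sq_le_sq' (abs_le.1 hx).1 (abs_le.1 hx).2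
  have hy2 := sq_le_sq' (abs_le.1 hy).1 (abs_le.1 hy).2
  have hxy : ((s * x + 2 / 3) ^ 2 + 2 * (t * y + 1 / 3) ^ 2) ^ 2 ≤ (1 / 6) ^ 2 :=
    pow_le_pow_left₀ (by positivity) (by linarith) 2
  linarith

lemma exists_sign_mul_eq_neg_abs (x : ℝ) : ∃ s : ℤ, (s = 1 ∨ s = -1) ∧ s * x = -|x| := by
  rcases abs_choice x with h | h
  · exact ⟨-1, .inr rfl, by rw [h]; simp⟩
  · exact ⟨1, .inl rfl, by rw [h]; simp⟩

lemma one_third_le_abs_and_one_sixth_le_abs {x y : ℝ} (hx : |x| ≤ 1) (hy : |y| ≤ 1 / 2)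
    (h : 3 / 2 ≤ (x ^ 2 + 2 * y ^ 2) ^ 2) : 1 / 3 ≤ |x| ∧ 1 / 6 ≤ |y| := by
  have hx2 : x ^ 2 ≤ |x| := by nlinarith [sq_abs x, abs_nonneg x]
  have hy2 : y ^ 2 ≤ |y| / 2 := by nlinarith [sq_abs y, abs_nonneg y]
  have hn : 6 / 5 ≤ x ^ 2 + 2 * y ^ 2 := by
    by_contra! hlt
    nlinarith [sq_nonneg x, sq_nonneg y]
  constructor <;> linarith

lemma exists_mem_generated_normSq_lt_one_of_corner {s t : ℤ} (hs : s = 1 ∨ s = -1)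
    (ht : t = 1 ∨ t = -1) {x y : ℝ} (hx : |s * x + 2 / 3| ≤ 1 / 3) (hy : |t * y + 1 / 3| ≤ 1 / 6)
    (a : ℝ) : ∃ g ∈ generated, Complex.normSq ((g * heis x y a) 2 2) < 1 := by
  set j := round (a - s * t * (1 + 2 * s * x - 4 * t * y) / 3)
  have hround : |a - j - s * t * (1 + 2 * s * x - 4 * t * y) / 3| ≤ 1 / 2 := by
    rw [sub_right_comm]
    exact abs_sub_round _
  have hshift : heis 0 0 (-j) * heis x y a = heis x y (a - j) := by
    rw [heis_mul_heis]
    congr 1 <;> ring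
  have hs2 : (s : ℝ) ^ 2 = 1 := by rcases hs with rfl | rfl <;> norm_num
  refine ⟨I₀ * heis 0 s (s * t) * I₀ * heis 0 0 (-j), ?_, ?_⟩
  · have hcorner : heis 0 s (s * t) ∈ generated := by simpa using heis_mem_generated 0 s (s * t)
    have hcentral : heis 0 0 (-j) ∈ generated := by simpa using heis_mem_generated 0 0 (-j)
    exact mul_mem (mul_mem (mul_mem I₀_mem_generated hcorner) I₀_mem_generated) hcentral
  · rw [Matrix.mul_assoc, hshift, I₀_mul_heis_mul_I₀_mul_heis_apply, normSq_add_mul_isq2, hs2,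
      neg_sq, neg_sq, one_mul, one_mul]
    exact corner_lt_one (by exact_mod_cast hs) (by exact_mod_cast ht) hx hy hround

lemma exists_mem_generated_normSq_lt_one_of_abs_le {x y : ℝ} (hx : |x| ≤ 1) (hy : |y| ≤ 1 / 2)
    (a : ℝ) : ∃ g ∈ generated, Complex.normSq ((g * heis x y a) 2 2) < 1 := by
  rcases lt_or_ge ((x ^ 2 + 2 * y ^ 2) ^ 2) (3 / 2) with h | h
  · have hshift : heis 0 0 (-round a) * heis x y a = heis x y (a - round a) := by
      rw [heis_mul_heis]
      congr 1 <;> ring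
    refine ⟨I₀ * heis 0 0 (-round a), mul_mem I₀_mem_generated ?_, ?_⟩
    · simpa using heis_mem_generated 0 0 (-round a)
    · rw [Matrix.mul_assoc, hshift, I₀_mul_heis_apply, normSq_add_mul_isq2]
      have ha := abs_le.1 (abs_sub_round a)
      linarith [sq_le_sq' ha.1 ha.2]
  · obtain ⟨hx', hy'⟩ := one_third_le_abs_and_one_sixth_le_abs hx hy h
    obtain ⟨s, hs, hsx⟩ := exists_sign_mul_eq_neg_abs x
    obtain ⟨t, ht, hty⟩ := exists_sign_mul_eq_neg_abs y
    refine exists_mem_generated_normSq_lt_one_of_corner hs ht ?_ ?_ a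
    · rw [hsx, abs_le]
      constructor <;> linarith
    · rw [hty, abs_le]
      constructor <;> linarith

lemma exists_mem_generated_normSq_lt_one (x y a : ℝ) :
    ∃ g ∈ generated, Complex.normSq ((g * heis x y a) 2 2) < 1 := by
  set m := round (x / 2)
  set n := round y
  have hx : |x - 2 * m| ≤ 1 := by
    rw [show x - 2 * m = 2 * (x / 2 - m) by ring, abs_mul, abs_two]
    linarith [abs_sub_round (x / 2)]
  obtain ⟨g, hg, hlt⟩ := exists_mem_generated_normSq_lt_one_of_abs_le hx (abs_sub_round y)
    (a + 2 * (n * x - 2 * m * y))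
  have hshift : heis (2 * (-m : ℤ)) (-n : ℤ) (0 : ℤ) * heis x y a =
      heis (x - 2 * m) (y - n) (a + 2 * (n * x - 2 * m * y)) := by
    rw [heis_mul_heis]
    congr 1 <;> push_cast <;> ring
  refine ⟨g * heis (2 * (-m : ℤ)) (-n : ℤ) (0 : ℤ), mul_mem hg (heis_mem_generated _ _ _), ?_⟩
  rwa [Matrix.mul_assoc, hshift]

lemma exists_mem_generated_normSq_mul_apply_lt {M : Matrix (Fin 3) (Fin 3) ℂ} (hM : inU21 M)
    (h20 : M 2 0 ≠ 0) :
    ∃ g ∈ generated, Complex.normSq ((g * M) 2 0) < Complex.normSq (M 2 0) := by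
  obtain ⟨x, y, a, hcol⟩ := eq_smul_heis_col_of_null (v := M.col 0) h20
    (by simpa [matJ] using hM.form_apply 0 0)
  obtain ⟨g, hg, hlt⟩ := exists_mem_generated_normSq_lt_one x y a
  have hentry : (g * M) 2 0 = M 2 0 * (g * heis x y a) 2 2 := by
    have hcol' (i : Fin 3) : M i 0 = M 2 0 * heis x y a i 2 := congrFun hcol i
    rw [Matrix.mul_apply, Matrix.mul_apply, Finset.mul_sum]
    exact Finset.sum_congr rfl fun i _ ↦ by rw [hcol' i, mul_left_comm]
  refine ⟨g, hg, ?_⟩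
  rw [hentry, Complex.normSq_mul]
  exact mul_lt_of_lt_one_right (Complex.normSq_pos.2 h20) hlt

lemma mem_or_neg_mem_generated_of_mul {g M : Matrix (Fin 3) (Fin 3) ℂ} (hg : g ∈ generated)
    (h : g * M ∈ generated ∨ -(g * M) ∈ generated) : M ∈ generated ∨ -M ∈ generated := by
  have hunit : IsUnit g.det := (isUnit_iff_isUnit_det g).1 (generated_le_sisterGroup hg).1.1
  have hcancel : g⁻¹ * (g * M) = M := Matrix.nonsing_inv_mul_cancel_left g M hunit
  refine h.imp (fun h ↦ ?_) fun h ↦ ?_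
  · simpa only [hcancel] using mul_mem (inv_mem_generated hg) h
  · simpa only [Matrix.mul_neg, hcancel] using mul_mem (inv_mem_generated hg) h

lemma mem_or_neg_mem_generated {M : Matrix (Fin 3) (Fin 3) ℂ} (hM : M ∈ sisterGroup) :
    M ∈ generated ∨ -M ∈ generated := by
  obtain ⟨n, hn⟩ := exists_normSq_eq_natCast (apply_two_zero_mem_ringO2 hM)
  induction n using Nat.strong_induction_on generalizing M with
  | _ n ih =>
    by_cases h20 : M 2 0 = 0
    · exact mem_or_neg_mem_generated_of_apply_eq_zero hM h20
    obtain ⟨g, hg, hlt⟩ := exists_mem_generated_normSq_mul_apply_lt hM.1 h20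
    have hgM : g * M ∈ sisterGroup := mul_mem (generated_le_sisterGroup hg) hM
    obtain ⟨k, hk⟩ := exists_normSq_eq_natCast (apply_two_zero_mem_ringO2 hgM)
    have hkn : k < n := by
      rw [hk, hn] at hlt
      exact_mod_cast hlt
    exact mem_or_neg_mem_generated_of_mul hg (ih k hkn hgM hk)

lemma exists_list_of_mem_generated {M : Matrix (Fin 3) (Fin 3) ℂ} (hM : M ∈ generated) :
    ∃ L : List (Matrix (Fin 3) (Fin 3) ℂ),
      (∀ A ∈ L, A ∈ ({I₀, R₁, R₂, R₃, T, I₀⁻¹, R₁⁻¹, R₂⁻¹, R₃⁻¹, T⁻¹} :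
        Set (Matrix (Fin 3) (Fin 3) ℂ))) ∧ L.prod = M := by
  obtain ⟨L, hL, hprod⟩ := Submonoid.exists_list_of_mem_closure hM
  refine ⟨L, fun A hA ↦ ?_, hprod⟩
  simpa only [generators, Set.mem_union, Set.image_insert_eq, Set.image_singleton,
    Set.mem_insert_iff, Set.mem_singleton_iff, or_assoc] using hL A hA

/-- `Γ_s^(2)` is generated, modulo `±I`, by `I₀, R₁, R₂, R₃, T`. -/
theorem gammaS2_generated (M : Matrix (Fin 3) (Fin 3) ℂ) (hM : GammaS2 M) :
    ∃ (ε : ℂ) (L : List (Matrix (Fin 3) (Fin 3) ℂ)),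
      (ε = 1 ∨ ε = -1) ∧
      (∀ A ∈ L, A ∈ ({I₀, R₁, R₂, R₃, T, I₀⁻¹, R₁⁻¹, R₂⁻¹, R₃⁻¹, T⁻¹} :
        Set (Matrix (Fin 3) (Fin 3) ℂ))) ∧
      M = ε • L.prod := by
  rcases mem_or_neg_mem_generated (mem_sisterGroup.2 hM) with h | h
  · obtain ⟨L, hL, hprod⟩ := exists_list_of_mem_generated h
    exact ⟨1, L, .inl rfl, hL, by rw [hprod, one_smul]⟩
  · obtain ⟨L, hL, hprod⟩ := exists_list_of_mem_generated h
    exact ⟨-1, L, .inr rfl, hL, by rw [hprod, neg_one_smul, neg_neg]⟩
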